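/- Let μ = (1/n)Σ_{i=1}^n δ_{x_i} and ν = (1/n)Σ_{i=1}^n δ_{y_i} with the 2n points x_1,…,x_n,y_1,…,y_n ∈ ℝ^d in general position, and suppose 2n ≤ d+1. Then: (i) for every pair of permutations (σ,τ) of {1,…,n} there exists θ ∈ S^{d−1} such that P_θ x_{σ(1)} < … < P_θ x_{σ(n)} and P_θ y_{τ(1)} < … < P_θ y_{τ(n)}; (ii) consequently minPS(μ, ν) = W_2(μ, ν). -/

import Mathlib

open MeasureTheory Filter Topology ProbabilityTheory
open scoped ENNReal RealInnerProductSpace Classical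

noncomputable section

/-- Euclidean space ℝ^d. -/
abbrev Euc (d : ℕ) : Type := EuclideanSpace ℝ (Fin d)

/-- `P2` : Borel probability measures with finite second moment. -/
def P2 {E : Type*} [NormedAddCommGroup E] [MeasurableSpace E] : Set (Measure E) :=
  {μ | IsProbabilityMeasure μ ∧ Integrable (fun x => ‖x‖ ^ 2) μ}

/-- Couplings between two measures. -/
def Coupling {E F : Type*} [MeasurableSpace E] [MeasurableSpace F]
    (μ : Measure E) (ν : Measure F) : Set (Measure (E × F)) :=
  {π | IsProbabilityMeasure π ∧ π.map Prod.fst = μ ∧ π.map Prod.snd = ν}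

/-- Quadratic transport cost of a plan. -/
def tCost {E : Type*} [NormedAddCommGroup E] [MeasurableSpace E]
    (π : Measure (E × E)) : ℝ :=
  ∫ p, ‖p.1 - p.2‖ ^ 2 ∂π

/-- Squared 2-Wasserstein distance. -/
def W2sq {E : Type*} [NormedAddCommGroup E] [MeasurableSpace E] (μ ν : Measure E) : ℝ :=
  sInf (tCost '' Coupling μ ν)

/-- 2-Wasserstein distance. -/
def W2 {E : Type*} [NormedAddCommGroup E] [MeasurableSpace E] (μ ν : Measure E) : ℝ :=
  Real.sqrt (W2sq μ ν)

/-- Optimal transport plans for the quadratic cost. -/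
def OptPlan {E : Type*} [NormedAddCommGroup E] [MeasurableSpace E]
    (μ ν : Measure E) : Set (Measure (E × E)) :=
  {π | π ∈ Coupling μ ν ∧ tCost π = W2sq μ ν}

/-- `Gamma ν μ1 μ2` : probability measures on `E × E × E` whose (1,2)-marginal is an optimal
plan between `ν` and `μ1` and whose (1,3)-marginal is an optimal plan between `ν` and `μ2`. -/
def Gamma {E : Type*} [NormedAddCommGroup E] [MeasurableSpace E]
    (ν μ1 μ2 : Measure E) : Set (Measure (E × E × E)) :=
  {ρ | IsProbabilityMeasure ρ ∧
    ρ.map (fun p => (p.1, p.2.1)) ∈ OptPlan ν μ1 ∧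
    ρ.map (fun p => (p.1, p.2.2)) ∈ OptPlan ν μ2}

/-- Cost `∫ ‖x1 − x2‖² dρ(y, x1, x2)` of a 3-plan. -/
def pivotCost {E : Type*} [NormedAddCommGroup E] [MeasurableSpace E]
    (ρ : Measure (E × E × E)) : ℝ :=
  ∫ p, ‖p.2.1 - p.2.2‖ ^ 2 ∂ρ

/-- Squared ν-based Wasserstein discrepancy. -/
def Wnusq {E : Type*} [NormedAddCommGroup E] [MeasurableSpace E]
    (ν μ1 μ2 : Measure E) : ℝ :=
  sInf (pivotCost '' Gamma ν μ1 μ2)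

/-- ν-based Wasserstein discrepancy. -/
def Wnu {E : Type*} [NormedAddCommGroup E] [MeasurableSpace E]
    (ν μ1 μ2 : Measure E) : ℝ :=
  Real.sqrt (Wnusq ν μ1 μ2)

/-- Weak convergence of a sequence of measures (against bounded continuous functions). -/
def WeakConv {E : Type*} [MeasurableSpace E] [TopologicalSpace E]
    (μs : ℕ → Measure E) (μ : Measure E) : Prop :=
  ∀ f : BoundedContinuousFunction E ℝ,
    Tendsto (fun n => ∫ x, f x ∂(μs n)) atTop (𝓝 (∫ x, f x ∂μ))

/-- Quantile function (pseudo-inverse c.d.f.) of a measure on ℝ. -/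
def quantile (ν : Measure ℝ) (t : ℝ) : ℝ :=
  sInf {s : ℝ | ENNReal.ofReal t ≤ ν (Set.Iic s)}

/-- Pushforward of `μ` by the projection `P_θ : x ↦ ⟪θ, x⟫`. -/
def projLine {d : ℕ} (θ : Euc d) (μ : Measure (Euc d)) : Measure ℝ :=
  μ.map (fun x => ⟪θ, x⟫)

/-- `μ_θ[μ1, μ2]` : the (unique) Wasserstein mean of `Q_θ#μ1` and `Q_θ#μ2`, given by the
explicit quantile formula `[(½ F_{ν1}^{[-1]} + ½ F_{ν2}^{[-1]})·θ]#L_{[0,1]}`. -/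
def pivotMiddle {d : ℕ} (θ : Euc d) (μ1 μ2 : Measure (Euc d)) : Measure (Euc d) :=
  (volume.restrict (Set.Icc (0 : ℝ) 1)).map
    (fun t => ((1 / 2) * quantile (projLine θ μ1) t
      + (1 / 2) * quantile (projLine θ μ2) t) • θ)

/-- Squared Pivot Sliced discrepancy. -/
def PSsq {d : ℕ} (θ : Euc d) (μ1 μ2 : Measure (Euc d)) : ℝ :=
  Wnusq (pivotMiddle θ μ1 μ2) μ1 μ2

/-- Pivot Sliced discrepancy. -/
def PS {d : ℕ} (θ : Euc d) (μ1 μ2 : Measure (Euc d)) : ℝ :=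
  Real.sqrt (PSsq θ μ1 μ2)

/-- `π_θ[μ1, μ2]` : the unique optimal 1D plan between `P_θ#μ1` and `P_θ#μ2`
(co-monotone quantile coupling). -/
def piTheta {d : ℕ} (θ : Euc d) (μ1 μ2 : Measure (Euc d)) : Measure (ℝ × ℝ) :=
  (volume.restrict (Set.Icc (0 : ℝ) 1)).map
    (fun t => (quantile (projLine θ μ1) t, quantile (projLine θ μ2) t))

/-- `Ω_θ(μ1, μ2)` : couplings of `μ1, μ2` whose projection by `(P_θ, P_θ)` is `π_θ[μ1, μ2]`. -/
def OmegaTheta {d : ℕ} (θ : Euc d) (μ1 μ2 : Measure (Euc d)) :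
    Set (Measure (Euc d × Euc d)) :=
  {ω | ω ∈ Coupling μ1 μ2 ∧
    ω.map (fun p => (⟪θ, p.1⟫, ⟪θ, p.2⟫)) = piTheta θ μ1 μ2}

/-- Squared constrained Wasserstein discrepancy `CW_θ²`. -/
def CWsq {d : ℕ} (θ : Euc d) (μ1 μ2 : Measure (Euc d)) : ℝ :=
  sInf (tCost '' OmegaTheta θ μ1 μ2)

/-- Wasserstein means: minimisers of `μ ↦ W₂²(μ1, μ) + W₂²(μ, μ2)` over `P2`. -/
def WMean {d : ℕ} (μ1 μ2 : Measure (Euc d)) : Set (Measure (Euc d)) :=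
  {μ | μ ∈ (P2 : Set (Measure (Euc d))) ∧
    ∀ μ' ∈ (P2 : Set (Measure (Euc d))),
      W2sq μ1 μ + W2sq μ μ2 ≤ W2sq μ1 μ' + W2sq μ' μ2}

/-- Uniform empirical measure `1/n ∑ δ_{x_i}`. -/
def empMeasure {d n : ℕ} (x : Fin n → Euc d) : Measure (Euc d) :=
  (n : ℝ≥0∞)⁻¹ • ∑ i, Measure.dirac (x i)

/-- Points indexed by `ι` are in general position: for every `1 ≤ k ≤ d`, no `k + 2` of
them lie in a `k`-dimensional affine subspace. -/
def InGeneralPosition {d : ℕ} {ι : Type*} (z : ι → Euc d) : Prop :=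
  ∀ k : ℕ, 1 ≤ k → k ≤ d → ∀ I : Finset ι, I.card = k + 2 →
    ∀ A : AffineSubspace ℝ (Euc d), Module.finrank ℝ A.direction = k →
      ¬ ∀ i ∈ I, z i ∈ A

/-- Squared Min-Pivot Sliced discrepancy. -/
def minPSsq {d : ℕ} (μ1 μ2 : Measure (Euc d)) : ℝ :=
  sInf {c : ℝ | ∃ θ : Euc d, ‖θ‖ = 1 ∧ c = PSsq θ μ1 μ2}

/-!
A coupling of two uniform empirical measures comes from a coupling of the uniform measures on the
index sets, that is from a doubly stochastic matrix, so by Birkhoff's theorem `W₂²` is the cost of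
pairing `x i` with `y (σ i)` for some permutation `σ`. Conversely, if `θ` sorts `x` and `y ∘ σ` in
the same order, then by the rearrangement inequality the plans pairing the `i`-th point of the
pivot with `x i` and with `y (σ i)` are both optimal, and gluing them along the pivot bounds `PS_θ²`
by that same cost. Since every glued plan projects to a coupling, `PS_θ² ≥ W₂²` for all `θ`, and
it remains to sort `x` and `y ∘ σ` simultaneously. General position with `2n ≤ d + 1` makes the
`2n` points affinely independent as soon as `n ≥ 2`, so some linear form takes arbitrary prescribed
values on them, up to a common additive constant.
-/

/-- The uniform probability measure on a finite type. A uniform empirical measure is its pushforward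
along the family of points. -/
abbrev unif (ι : Type*) [MeasurableSpace ι] : Measure ι := uniformOn Set.univ

section Coupling

variable {Ω Ω' E F : Type*} [MeasurableSpace Ω] [MeasurableSpace Ω'] [MeasurableSpace E]
  [MeasurableSpace F]

lemma map_prodMk_mem_coupling (P : Measure Ω) [IsProbabilityMeasure P] {a : Ω → E} {b : Ω → F}
    (ha : Measurable a) (hb : Measurable b) :
    P.map (fun ω => (a ω, b ω)) ∈ Coupling (P.map a) (P.map b) :=
  ⟨Measure.isProbabilityMeasure_map (ha.prodMk hb).aemeasurable,
    Measure.fst_map_prodMk hb, Measure.snd_map_prodMk ha⟩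

lemma condDistrib_id_map_ae_eq_dirac [StandardBorelSpace Ω] [Nonempty Ω] [StandardBorelSpace E]
    [Nonempty E] (P : Measure Ω) [IsFiniteMeasure P] {a : Ω → E} (ha : Measurable a) :
    ∀ᵐ x ∂P.map a, (condDistrib id a P x).map a = Measure.dirac x := by
  filter_upwards [condDistrib_comp a (Y := id) (μ := P) aemeasurable_id ha,
    condDistrib_self (μ := P) a] with x hmap hself
  rw [← Kernel.map_apply _ ha, ← hmap, Function.comp_id, hself, Kernel.id_apply]

lemma map_fst_parallelComp_comp {κ : Kernel E Ω} {η : Kernel F Ω'} [IsSFiniteKernel κ]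
    [IsMarkovKernel η] (π : Measure (E × F)) :
    ((κ ∥ₖ η) ∘ₘ π).map Prod.fst = κ ∘ₘ π.map Prod.fst := by
  rw [Measure.map_comp _ _ measurable_fst, ← Measure.deterministic_comp_eq_map measurable_fst,
    Measure.comp_assoc]
  congr 1
  ext x : 1
  rw [Kernel.comp_deterministic_eq_comap, Kernel.comap_apply, Kernel.map_apply _ measurable_fst,
    Kernel.parallelComp_apply, Measure.map_fst_prod, measure_univ, one_smul]

lemma map_snd_parallelComp_comp {κ : Kernel E Ω} {η : Kernel F Ω'} [IsMarkovKernel κ]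
    [IsSFiniteKernel η] (π : Measure (E × F)) :
    ((κ ∥ₖ η) ∘ₘ π).map Prod.snd = η ∘ₘ π.map Prod.snd := by
  rw [Measure.map_comp _ _ measurable_snd, ← Measure.deterministic_comp_eq_map measurable_snd,
    Measure.comp_assoc]
  congr 1
  ext x : 1
  rw [Kernel.comp_deterministic_eq_comap, Kernel.comap_apply, Kernel.map_apply _ measurable_snd,
    Kernel.parallelComp_apply, Measure.map_snd_prod, measure_univ, one_smul]

-- Given `(x, y)` drawn from `π`, draw independently `ω` from the law of `P` given `a = x`
-- and `ω'` from the law of `Q` given `b = y`.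
lemma exists_coupling_map_prodMap_eq [StandardBorelSpace Ω] [StandardBorelSpace Ω']
    [StandardBorelSpace E] [StandardBorelSpace F] {P : Measure Ω} {Q : Measure Ω'}
    [IsProbabilityMeasure P] [IsProbabilityMeasure Q] {a : Ω → E} {b : Ω' → F}
    (ha : Measurable a) (hb : Measurable b) {π : Measure (E × F)}
    (hπ : π ∈ Coupling (P.map a) (Q.map b)) :
    ∃ γ ∈ Coupling P Q, γ.map (Prod.map a b) = π := by
  obtain ⟨_, hfst, hsnd⟩ := hπ
  have : Nonempty Ω := P.nonempty_of_neZero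
  have : Nonempty Ω' := Q.nonempty_of_neZero
  have : Nonempty E := ‹Nonempty Ω›.map a
  have : Nonempty F := ‹Nonempty Ω'›.map b
  let κ := condDistrib id a P ∥ₖ condDistrib id b Q
  refine ⟨κ ∘ₘ π, ⟨inferInstance, ?_, ?_⟩, ?_⟩
  · rw [map_fst_parallelComp_comp, hfst, condDistrib_comp_map ha.aemeasurable aemeasurable_id,
      Measure.map_id]
  · rw [map_snd_parallelComp_comp, hsnd, condDistrib_comp_map hb.aemeasurable aemeasurable_id,
      Measure.map_id]
  · have hx : ∀ᵐ p ∂π, (condDistrib id a P p.1).map a = Measure.dirac p.1 :=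
      ae_of_ae_map measurable_fst.aemeasurable (hfst ▸ condDistrib_id_map_ae_eq_dirac P ha)
    have hy : ∀ᵐ p ∂π, (condDistrib id b Q p.2).map b = Measure.dirac p.2 :=
      ae_of_ae_map measurable_snd.aemeasurable (hsnd ▸ condDistrib_id_map_ae_eq_dirac Q hb)
    rw [Measure.map_comp _ _ (ha.prodMap hb)]
    refine (Measure.comp_congr (η := Kernel.id) ?_).trans Measure.id_comp
    filter_upwards [hx, hy] with p hx hy
    rw [Kernel.map_apply _ (ha.prodMap hb), Kernel.parallelComp_apply,
      ← Measure.map_prod_map _ _ ha hb, hx, hy, Measure.dirac_prod_dirac, Kernel.id_apply]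

end Coupling

section Birkhoff

lemma exists_perm_sum_le_of_mem_doublyStochastic {ι : Type*} [Fintype ι] [DecidableEq ι]
    {R : Type*} [Field R] [LinearOrder R] [IsStrictOrderedRing R] {M : Matrix ι ι R}
    (hM : M ∈ doublyStochastic R ι) (c : ι → ι → R) :
    ∃ σ : Equiv.Perm ι, ∑ i, c i (σ i) ≤ ∑ i, ∑ j, M i j * c i j := by
  let cost : Matrix ι ι R →ₗ[R] R :=
    { toFun := fun N => ∑ i, ∑ j, N i j * c i j
      map_add' := fun N N' => by
        simp only [Matrix.add_apply, add_mul, Finset.sum_add_distrib]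
      map_smul' := fun r N => by
        simp only [Matrix.smul_apply, smul_eq_mul, mul_assoc, ← Finset.mul_sum, RingHom.id_apply] }
  rw [← SetLike.mem_coe, doublyStochastic_eq_convexHull_permMatrix] at hM
  obtain ⟨_, ⟨σ, rfl⟩, hσ⟩ :=
    (cost.concaveOn convex_univ).exists_le_of_mem_convexHull (Set.subset_univ _) hM
  refine ⟨σ, le_of_eq_of_le (Finset.sum_congr rfl fun i _ => ?_) hσ⟩
  simp [Equiv.Perm.permMatrix, PEquiv.toMatrix_apply]

variable {ι : Type*} [MeasurableSpace ι] [MeasurableSingletonClass ι]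

lemma integral_unif [Fintype ι] (f : ι → ℝ) :
    ∫ i, f i ∂unif ι = (Fintype.card ι : ℝ)⁻¹ * ∑ i, f i := by
  simp [uniformOn, ProbabilityTheory.cond]

lemma map_unif_perm [Finite ι] (σ : Equiv.Perm ι) : (unif ι).map σ = unif ι := by
  cases nonempty_fintype ι
  refine Measure.ext_of_singleton fun i => ?_
  rw [Measure.map_apply (measurable_of_finite σ) (measurableSet_singleton i), uniformOn_univ,
    uniformOn_univ, ← Equiv.image_symm_eq_preimage, Set.image_singleton,
    Measure.count_singleton, Measure.count_singleton]

lemma map_unif_comp_perm [Finite ι] {E : Type*} [MeasurableSpace E] (z : ι → E)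
    (σ : Equiv.Perm ι) : (unif ι).map (z ∘ σ) = (unif ι).map z := by
  rw [← Measure.map_map (measurable_of_finite z) (measurable_of_finite σ), map_unif_perm]

lemma card_mul_real_singleton_mem_doublyStochastic [Fintype ι] [DecidableEq ι]
    {γ : Measure (ι × ι)} (hγ : γ ∈ Coupling (unif ι) (unif ι)) :
    (Matrix.of fun i j => Fintype.card ι * γ.real {(i, j)}) ∈ doublyStochastic ℝ ι := by
  obtain ⟨_, hfst, hsnd⟩ := hγ
  have hcard (i : ι) : Fintype.card ι * (unif ι).real {i} = 1 := by
    have : Nonempty ι := ⟨i⟩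
    simp [measureReal_def, uniformOn_univ]
  have hrow (i : ι) : ∑ j, γ.real {(i, j)} = (unif ι).real {i} := by
    rw [← hfst, map_measureReal_apply measurable_fst (measurableSet_singleton i),
      ← Set.prod_univ, ← Finset.coe_singleton, ← Finset.coe_univ, ← Finset.coe_product,
      ← sum_measureReal_singleton, Finset.sum_product, Finset.sum_singleton]
  have hcol (j : ι) : ∑ i, γ.real {(i, j)} = (unif ι).real {j} := by
    rw [← hsnd, map_measureReal_apply measurable_snd (measurableSet_singleton j),
      ← Set.univ_prod, ← Finset.coe_singleton, ← Finset.coe_univ, ← Finset.coe_product,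
      ← sum_measureReal_singleton, Finset.sum_product_right, Finset.sum_singleton]
  have hnonneg (i j : ι) : 0 ≤ Fintype.card ι * γ.real {(i, j)} := by positivity
  refine mem_doublyStochastic_iff_sum.2 ⟨hnonneg, fun i => ?_, fun j => ?_⟩
  · simp only [Matrix.of_apply, ← Finset.mul_sum, hrow, hcard]
  · simp only [Matrix.of_apply, ← Finset.mul_sum, hcol, hcard]

lemma exists_perm_integral_le_of_mem_coupling [Finite ι] {γ : Measure (ι × ι)}
    (hγ : γ ∈ Coupling (unif ι) (unif ι)) (c : ι → ι → ℝ) :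
    ∃ σ : Equiv.Perm ι, ∫ i, c i (σ i) ∂unif ι ≤ ∫ p, c p.1 p.2 ∂γ := by
  classical
  cases nonempty_fintype ι
  have := hγ.1
  have : Nonempty ι := γ.nonempty_of_neZero.map Prod.fst
  obtain ⟨σ, hσ⟩ :=
    exists_perm_sum_le_of_mem_doublyStochastic (card_mul_real_singleton_mem_doublyStochastic hγ) c
  refine ⟨σ, ?_⟩
  rw [integral_unif, integral_fintype .of_finite, Fintype.sum_prod_type,
    inv_mul_le_iff₀ (by positivity)]
  simpa only [Matrix.of_apply, mul_assoc, ← Finset.mul_sum, smul_eq_mul] using hσ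

end Birkhoff

section Transport

variable {E : Type*} [NormedAddCommGroup E] [MeasurableSpace E]

lemma bddBelow_tCost_image (S : Set (Measure (E × E))) : BddBelow (tCost '' S) :=
  ⟨0, Set.forall_mem_image.2 fun _ _ => integral_nonneg fun _ => sq_nonneg _⟩

lemma bddBelow_pivotCost_image (S : Set (Measure (E × E × E))) : BddBelow (pivotCost '' S) :=
  ⟨0, Set.forall_mem_image.2 fun _ _ => integral_nonneg fun _ => sq_nonneg _⟩

lemma W2sq_le_tCost {μ ν : Measure E} {π : Measure (E × E)} (hπ : π ∈ Coupling μ ν) :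
    W2sq μ ν ≤ tCost π :=
  csInf_le (bddBelow_tCost_image _) (Set.mem_image_of_mem _ hπ)

lemma Wnusq_le_pivotCost {ν μ1 μ2 : Measure E} {ρ : Measure (E × E × E)}
    (hρ : ρ ∈ Gamma ν μ1 μ2) : Wnusq ν μ1 μ2 ≤ pivotCost ρ :=
  csInf_le (bddBelow_pivotCost_image _) (Set.mem_image_of_mem _ hρ)

lemma map_snd_mem_coupling_of_mem_Gamma {ν μ1 μ2 : Measure E} {ρ : Measure (E × E × E)}
    (hρ : ρ ∈ Gamma ν μ1 μ2) : ρ.map Prod.snd ∈ Coupling μ1 μ2 := by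
  obtain ⟨_, ⟨⟨_, _, h1⟩, _⟩, ⟨⟨_, _, h2⟩, _⟩⟩ := hρ
  rw [Measure.map_map (by fun_prop) (by fun_prop)] at h1 h2
  refine ⟨Measure.isProbabilityMeasure_map measurable_snd.aemeasurable, ?_, ?_⟩
  · rw [Measure.map_map measurable_fst measurable_snd]
    exact h1
  · rw [Measure.map_map measurable_snd measurable_snd]
    exact h2

variable [BorelSpace E] [SecondCountableTopology E]

lemma tCost_map {Ω : Type*} [MeasurableSpace Ω] (γ : Measure Ω) {f : Ω → E × E}
    (hf : Measurable f) : tCost (γ.map f) = ∫ ω, ‖(f ω).1 - (f ω).2‖ ^ 2 ∂γ :=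
  integral_map hf.aemeasurable (by fun_prop)

lemma pivotCost_map {Ω : Type*} [MeasurableSpace Ω] (γ : Measure Ω) {f : Ω → E × E × E}
    (hf : Measurable f) : pivotCost (γ.map f) = ∫ ω, ‖(f ω).2.1 - (f ω).2.2‖ ^ 2 ∂γ :=
  integral_map hf.aemeasurable (by fun_prop)

lemma W2sq_le_Wnusq {ν μ1 μ2 : Measure E} (hne : (Gamma ν μ1 μ2).Nonempty) :
    W2sq μ1 μ2 ≤ Wnusq ν μ1 μ2 := by
  refine le_csInf (hne.image _) (Set.forall_mem_image.2 fun ρ hρ => ?_)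
  calc W2sq μ1 μ2 ≤ tCost (ρ.map Prod.snd) := W2sq_le_tCost (map_snd_mem_coupling_of_mem_Gamma hρ)
    _ = pivotCost ρ := tCost_map ρ measurable_snd

end Transport

section Assignment

variable {ι E : Type*} [Finite ι] [Nonempty ι] [MeasurableSpace ι] [MeasurableSingletonClass ι]
  [NormedAddCommGroup E] [MeasurableSpace E] [BorelSpace E] [SecondCountableTopology E]
  [CompleteSpace E]

lemma map_prodMk_mem_optPlan {a b : ι → E}
    (h : ∀ σ : Equiv.Perm ι,
      ∫ i, ‖a i - b i‖ ^ 2 ∂unif ι ≤ ∫ i, ‖a i - b (σ i)‖ ^ 2 ∂unif ι) :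
    (unif ι).map (fun i => (a i, b i)) ∈ OptPlan ((unif ι).map a) ((unif ι).map b) := by
  have ha := measurable_of_finite a
  have hb := measurable_of_finite b
  have hmem := map_prodMk_mem_coupling (unif ι) ha hb
  refine ⟨hmem, le_antisymm ?_ (W2sq_le_tCost hmem)⟩
  refine le_csInf (Set.Nonempty.image _ ⟨_, hmem⟩) (Set.forall_mem_image.2 fun π hπ => ?_)
  obtain ⟨γ, hγ, rfl⟩ := exists_coupling_map_prodMap_eq ha hb hπ
  obtain ⟨σ, hσ⟩ := exists_perm_integral_le_of_mem_coupling hγ fun i j => ‖a i - b j‖ ^ 2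
  calc tCost ((unif ι).map fun i => (a i, b i)) = ∫ i, ‖a i - b i‖ ^ 2 ∂unif ι :=
        tCost_map _ (ha.prodMk hb)
    _ ≤ ∫ i, ‖a i - b (σ i)‖ ^ 2 ∂unif ι := h σ
    _ ≤ ∫ p, ‖a p.1 - b p.2‖ ^ 2 ∂γ := hσ
    _ = tCost (γ.map (Prod.map a b)) := (tCost_map _ (ha.prodMap hb)).symm

lemma exists_perm_W2sq_map_unif_eq (a b : ι → E) :
    ∃ σ : Equiv.Perm ι,
      W2sq ((unif ι).map a) ((unif ι).map b) = ∫ i, ‖a i - b (σ i)‖ ^ 2 ∂unif ι := by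
  obtain ⟨σ, hσ⟩ := Finite.exists_min fun σ : Equiv.Perm ι => ∫ i, ‖a i - b (σ i)‖ ^ 2 ∂unif ι
  have hopt := map_prodMk_mem_optPlan (a := a) (b := b ∘ σ) fun τ => hσ (τ.trans σ)
  refine ⟨σ, ?_⟩
  rw [← map_unif_comp_perm b σ, ← hopt.2, tCost_map _ (measurable_of_finite _)]
  rfl

end Assignment

section Pivot

variable {ι E : Type*} [Finite ι] [Nonempty ι] [LinearOrder ι] [MeasurableSpace ι]
  [MeasurableSingletonClass ι] [NormedAddCommGroup E] [InnerProductSpace ℝ E] [MeasurableSpace E]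
  [BorelSpace E] [SecondCountableTopology E] [CompleteSpace E]

lemma map_smul_prodMk_mem_optPlan {θ : E} {m : ι → ℝ} {b : ι → E} (hm : Monotone m)
    (hb : Monotone fun i => ⟪θ, b i⟫) :
    (unif ι).map (fun i => (m i • θ, b i)) ∈
      OptPlan ((unif ι).map fun i => m i • θ) ((unif ι).map b) := by
  cases nonempty_fintype ι
  refine map_prodMk_mem_optPlan fun σ => ?_
  have hexpand (i j : ι) :
      ‖m i • θ - b j‖ ^ 2 = ‖m i • θ‖ ^ 2 + ‖b j‖ ^ 2 - 2 * (m i * ⟪θ, b j⟫) := by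
    rw [norm_sub_sq_real, real_inner_smul_left]
    ring
  have hrearrange : ∑ i, m i * ⟪θ, b (σ i)⟫ ≤ ∑ i, m i * ⟪θ, b i⟫ :=
    (hm.monovary hb).sum_mul_comp_perm_le_sum_mul
  simp only [integral_unif, hexpand, Finset.sum_sub_distrib, Finset.sum_add_distrib,
    ← Finset.mul_sum, Equiv.sum_comp σ fun i => ‖b i‖ ^ 2]
  gcongr

lemma map_smul_prodMk_mem_Gamma {θ : E} {m : ι → ℝ} {a b : ι → E} (hm : Monotone m)
    (ha : Monotone fun i => ⟪θ, a i⟫) (hb : Monotone fun i => ⟪θ, b i⟫) :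
    (unif ι).map (fun i => (m i • θ, a i, b i)) ∈
      Gamma ((unif ι).map fun i => m i • θ) ((unif ι).map a) ((unif ι).map b) := by
  have hmeas := measurable_of_finite fun i => (m i • θ, a i, b i)
  refine ⟨Measure.isProbabilityMeasure_map hmeas.aemeasurable, ?_, ?_⟩
  · rw [Measure.map_map (by fun_prop) hmeas]
    exact map_smul_prodMk_mem_optPlan hm ha
  · rw [Measure.map_map (by fun_prop) hmeas]
    exact map_smul_prodMk_mem_optPlan hm hb

end Pivot

section Quantile

lemma empMeasure_eq_map_unif {d n : ℕ} (x : Fin n → Euc d) :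
    empMeasure x = (unif (Fin n)).map x := by
  simp only [empMeasure, uniformOn, ProbabilityTheory.cond, Measure.restrict_univ,
    Measure.count_univ, ENat.card_eq_coe_fintype_card, Fintype.card_fin, Measure.map_smul]
  rw [Measure.count, Measure.sum_fintype,
    Measure.map_finset_sum (measurable_of_finite x).aemeasurable]
  simp only [Measure.map_dirac]
  rfl

/-- The index `i` of the cell `(i/n, (i+1)/n]` of `(0, 1]` that contains `t`; junk for `t` outside
`(0, 1]`. -/
def cellIndex (n : ℕ) [NeZero n] (t : ℝ) : Fin n :=
  Fin.ofNat n (⌈t * n⌉₊ - 1)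

variable {n : ℕ} [NeZero n]

lemma cellIndex_eq_iff {t : ℝ} (ht : t ∈ Set.Ioc (0 : ℝ) 1) (i : Fin n) :
    cellIndex n t = i ↔ (i : ℝ) < t * n ∧ t * n ≤ i + 1 := by
  have hn : (0 : ℝ) < n := Nat.cast_pos.2 (NeZero.pos n)
  have hpos : 0 < ⌈t * n⌉₊ := Nat.ceil_pos.2 (mul_pos ht.1 hn)
  have hle : ⌈t * n⌉₊ ≤ n := Nat.ceil_le.2 (mul_le_of_le_one_left hn.le ht.2)
  rw [cellIndex, Fin.ext_iff, Fin.val_ofNat, Nat.mod_eq_of_lt (by omega),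
    Nat.sub_eq_iff_eq_add hpos, Nat.ceil_eq_iff (Nat.succ_ne_zero _)]
  simp

lemma measurable_cellIndex : Measurable (cellIndex n) :=
  (measurable_of_countable fun k : ℕ => Fin.ofNat n (k - 1)).comp
    (Nat.measurable_ceil.comp (measurable_id.mul_const _))

lemma map_cellIndex :
    (volume.restrict (Set.Icc (0 : ℝ) 1)).map (cellIndex n) = unif (Fin n) := by
  have hn : (0 : ℝ) < n := Nat.cast_pos.2 (NeZero.pos n)
  rw [← restrict_Ioc_eq_restrict_Icc]
  refine Measure.ext_of_singleton fun i => ?_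
  have hi : ((i : ℕ) : ℝ) + 1 ≤ n := mod_cast i.isLt
  have hcell : cellIndex n ⁻¹' {i} ∩ Set.Ioc 0 1 = Set.Ioc ((i : ℝ) / n) ((i + 1) / n) := by
    ext t
    rw [Set.mem_Ioc, div_lt_iff₀ hn, le_div_iff₀ hn]
    refine ⟨fun ⟨hti, ht⟩ => (cellIndex_eq_iff ht i).1 hti, fun ht => ?_⟩
    have ht01 : t ∈ Set.Ioc (0 : ℝ) 1 :=
      ⟨pos_of_mul_pos_left ((Nat.cast_nonneg _).trans_lt ht.1) hn.le,
        le_of_mul_le_mul_right (by linarith [ht.2]) hn⟩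
    exact ⟨(cellIndex_eq_iff ht01 i).2 ht, ht01⟩
  rw [Measure.map_apply measurable_cellIndex (measurableSet_singleton i),
    Measure.restrict_apply (measurable_cellIndex (measurableSet_singleton i)), hcell,
    Real.volume_Ioc, uniformOn_univ, Measure.count_singleton, Fintype.card_fin,
    ← sub_div, add_sub_cancel_left, one_div, one_div, ENNReal.ofReal_inv_of_pos hn,
    ENNReal.ofReal_natCast]

lemma ofReal_le_map_unif_Iic_iff {u : Fin n → ℝ} (hu : Monotone u) {t : ℝ}
    (ht : t ∈ Set.Ioc (0 : ℝ) 1) (s : ℝ) :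
    ENNReal.ofReal t ≤ (unif (Fin n)).map u (Set.Iic s) ↔ u (cellIndex n t) ≤ s := by
  have hn : (0 : ℝ) < n := Nat.cast_pos.2 (NeZero.pos n)
  obtain ⟨hlt, hle⟩ := (cellIndex_eq_iff ht (cellIndex n t)).1 rfl
  have hcdf : (unif (Fin n)).map u (Set.Iic s)
      = ENNReal.ofReal (({j | u j ≤ s} : Finset (Fin n)).card / n) := by
    rw [Measure.map_apply (measurable_of_finite u) measurableSet_Iic, uniformOn_univ,
      ENNReal.ofReal_div_of_pos hn, ENNReal.ofReal_natCast, ENNReal.ofReal_natCast,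
      Measure.count_apply_finite _ (Set.toFinite _), Fintype.card_fin]
    congr
    ext j
    simp
  rw [hcdf, ENNReal.ofReal_le_ofReal_iff (by positivity), le_div_iff₀ hn,
    ← Tuple.lt_card_le_iff_apply_le_of_monotone hu]
  exact ⟨fun h => mod_cast hlt.trans_le h, fun h => hle.trans (mod_cast h)⟩

lemma quantile_map_unif {u : Fin n → ℝ} (hu : Monotone u) {t : ℝ} (ht : t ∈ Set.Ioc (0 : ℝ) 1) :
    quantile ((unif (Fin n)).map u) t = u (cellIndex n t) := by
  simp only [quantile, ofReal_le_map_unif_Iic_iff hu ht]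
  exact csInf_Ici

end Quantile

section PivotSliced

variable {d n : ℕ} [NeZero n] {θ : Euc d}

lemma pivotMiddle_map_unif {a b : Fin n → Euc d} (ha : Monotone fun i => ⟪θ, a i⟫)
    (hb : Monotone fun i => ⟪θ, b i⟫) :
    pivotMiddle θ ((unif (Fin n)).map a) ((unif (Fin n)).map b) =
      (unif (Fin n)).map fun i => ((1 / 2) * ⟪θ, a i⟫ + (1 / 2) * ⟪θ, b i⟫) • θ := by
  have hproj (z : Fin n → Euc d) :
      projLine θ ((unif (Fin n)).map z) = (unif (Fin n)).map fun i => ⟪θ, z i⟫ :=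
    Measure.map_map (by fun_prop) (measurable_of_finite z)
  have hcell : (fun t => ((1 / 2) * quantile ((unif (Fin n)).map fun i => ⟪θ, a i⟫) t
        + (1 / 2) * quantile ((unif (Fin n)).map fun i => ⟪θ, b i⟫) t) • θ)
      =ᵐ[volume.restrict (Set.Icc 0 1)]
      (fun i => ((1 / 2) * ⟪θ, a i⟫ + (1 / 2) * ⟪θ, b i⟫) • θ) ∘ cellIndex n := by
    rw [← restrict_Ioc_eq_restrict_Icc]
    filter_upwards [ae_restrict_mem measurableSet_Ioc] with t ht
    rw [quantile_map_unif ha ht, quantile_map_unif hb ht, Function.comp_apply]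
  rw [pivotMiddle, hproj, hproj, Measure.map_congr hcell,
    ← Measure.map_map (measurable_of_finite _) measurable_cellIndex, map_cellIndex]

lemma map_mem_Gamma_pivotMiddle {a b : Fin n → Euc d} (ha : Monotone fun i => ⟪θ, a i⟫)
    (hb : Monotone fun i => ⟪θ, b i⟫) :
    (unif (Fin n)).map (fun i => (((1 / 2) * ⟪θ, a i⟫ + (1 / 2) * ⟪θ, b i⟫) • θ, a i, b i)) ∈
      Gamma (pivotMiddle θ ((unif (Fin n)).map a) ((unif (Fin n)).map b))
        ((unif (Fin n)).map a) ((unif (Fin n)).map b) := by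
  rw [pivotMiddle_map_unif ha hb]
  exact map_smul_prodMk_mem_Gamma
    ((ha.const_mul (by norm_num)).add (hb.const_mul (by norm_num))) ha hb

lemma PSsq_map_unif_le {a b : Fin n → Euc d} (ha : Monotone fun i => ⟪θ, a i⟫)
    (hb : Monotone fun i => ⟪θ, b i⟫) :
    PSsq θ ((unif (Fin n)).map a) ((unif (Fin n)).map b) ≤ ∫ i, ‖a i - b i‖ ^ 2 ∂unif (Fin n) :=
  (Wnusq_le_pivotCost (map_mem_Gamma_pivotMiddle ha hb)).trans_eq
    (pivotCost_map _ (measurable_of_finite _))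

lemma W2sq_le_PSsq_map_unif (θ : Euc d) (x y : Fin n → Euc d) :
    W2sq ((unif (Fin n)).map x) ((unif (Fin n)).map y) ≤
      PSsq θ ((unif (Fin n)).map x) ((unif (Fin n)).map y) := by
  have hx := Tuple.monotone_sort fun i => ⟪θ, x i⟫
  have hy := Tuple.monotone_sort fun i => ⟪θ, y i⟫
  rw [← map_unif_comp_perm x (Tuple.sort fun i => ⟪θ, x i⟫),
    ← map_unif_comp_perm y (Tuple.sort fun i => ⟪θ, y i⟫)]
  exact W2sq_le_Wnusq ⟨_, map_mem_Gamma_pivotMiddle hx hy⟩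

lemma minPSsq_map_unif_eq_W2sq {x y : Fin n → Euc d}
    (hsort : ∀ σ : Equiv.Perm (Fin n), ∃ θ : Euc d, ‖θ‖ = 1 ∧
      Monotone (fun i => ⟪θ, x i⟫) ∧ Monotone (fun i => ⟪θ, y (σ i)⟫)) :
    minPSsq ((unif (Fin n)).map x) ((unif (Fin n)).map y) =
      W2sq ((unif (Fin n)).map x) ((unif (Fin n)).map y) := by
  obtain ⟨σ, hσ⟩ := exists_perm_W2sq_map_unif_eq x y
  obtain ⟨θ, hθ, hx, hy⟩ := hsort σ
  have hle : PSsq θ ((unif (Fin n)).map x) ((unif (Fin n)).map y) ≤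
      W2sq ((unif (Fin n)).map x) ((unif (Fin n)).map y) := by
    rw [hσ, ← map_unif_comp_perm y σ]
    exact PSsq_map_unif_le hx hy
  refine IsLeast.csInf_eq ⟨⟨θ, hθ, (W2sq_le_PSsq_map_unif θ x y).antisymm hle⟩, ?_⟩
  rintro _ ⟨θ', -, rfl⟩
  exact W2sq_le_PSsq_map_unif θ' x y

end PivotSliced

section GeneralPosition

lemma exists_linearMap_apply_eq {k ι V W : Type*} [DivisionRing k] [AddCommGroup V] [Module k V]
    [AddCommGroup W] [Module k W] {z : ι → V} (hz : LinearIndependent k z) (v : ι → W) :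
    ∃ φ : V →ₗ[k] W, ∀ i, φ (z i) = v i := by
  obtain ⟨φ, hφ⟩ := LinearMap.exists_extend ((Module.Basis.span hz).constr ℕ v)
  refine ⟨φ, fun i => ?_⟩
  calc φ (z i) = (φ ∘ₗ (Submodule.span k (Set.range z)).subtype) (Module.Basis.span hz i) := by
        rw [LinearMap.comp_apply, Submodule.subtype_apply, Module.Basis.span_apply]
    _ = v i := by rw [hφ, Module.Basis.constr_basis]

lemma exists_affineMap_apply_eq {k ι V P W : Type*} [DivisionRing k] [AddCommGroup V] [Module k V]
    [AddTorsor V P] [AddCommGroup W] [Module k W] {z : ι → P} (hz : AffineIndependent k z)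
    (v : ι → W) : ∃ f : P →ᵃ[k] W, ∀ i, f (z i) = v i := by
  rcases isEmpty_or_nonempty ι with _ | ⟨⟨i₀⟩⟩
  · exact ⟨0, isEmptyElim⟩
  obtain ⟨φ, hφ⟩ := exists_linearMap_apply_eq
    ((affineIndependent_iff_linearIndependent_vsub k z i₀).1 hz) fun i => v i - v i₀
  refine ⟨φ.toAffineMap.comp (AffineMap.id k P -ᵥ AffineMap.const k P (z i₀)) +
    AffineMap.const k P (v i₀), fun i => ?_⟩
  rcases eq_or_ne i i₀ with rfl | hi
  · simp
  · simp [hφ ⟨i, hi⟩]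

lemma exists_le_finrank_eq {k V : Type*} [DivisionRing k] [AddCommGroup V] [Module k V]
    [FiniteDimensional k V] (W : Submodule k V) {m : ℕ} (hWm : Module.finrank k W ≤ m)
    (hm : m ≤ Module.finrank k V) : ∃ U : Submodule k V, W ≤ U ∧ Module.finrank k U = m := by
  induction m, hWm using Nat.le_induction with
  | base => exact ⟨W, le_rfl, rfl⟩
  | succ m _ ih =>
    obtain ⟨U, hWU, rfl⟩ := ih (Nat.le_of_succ_le hm)
    obtain ⟨v, hv⟩ := U.exists_of_finrank_lt hm
    refine ⟨U ⊔ Submodule.span k {v}, hWU.trans le_sup_left, ?_⟩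
    exact Submodule.finrank_sup_span_singleton (by simpa using hv 1 one_ne_zero)

lemma InGeneralPosition.affineIndependent {d : ℕ} {ι : Type*} [Fintype ι] {z : ι → Euc d}
    (hz : InGeneralPosition z) (hcard : 3 ≤ Fintype.card ι) (hdim : Fintype.card ι ≤ d + 1) :
    AffineIndependent ℝ z := by
  obtain ⟨k, hk⟩ := Nat.exists_eq_add_of_le' (Nat.le_of_succ_le hcard)
  obtain ⟨i₀⟩ : Nonempty ι := Fintype.card_pos_iff.1 (by omega)
  rw [affineIndependent_iff_not_finrank_vectorSpan_le ℝ z hk]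
  intro hspan
  obtain ⟨U, hU, hUk⟩ :=
    exists_le_finrank_eq _ hspan (by rw [finrank_euclideanSpace_fin]; omega)
  refine hz k (by omega) (by omega) Finset.univ hk (AffineSubspace.mk' (z i₀) U)
    (by rwa [AffineSubspace.direction_mk']) fun i _ => ?_
  exact AffineSubspace.mem_mk'.2
    (hU (vsub_mem_vectorSpan ℝ (Set.mem_range_self i) (Set.mem_range_self i₀)))

section InnerProductSpace

variable {E : Type*} [NormedAddCommGroup E] [InnerProductSpace ℝ E] [FiniteDimensional ℝ E]

lemma exists_inner_eq_add_const {ι : Type*} {z : ι → E} (hz : AffineIndependent ℝ z) (v : ι → ℝ) :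
    ∃ (θ : E) (c : ℝ), ∀ i, ⟪θ, z i⟫ = v i + c := by
  obtain ⟨f, hf⟩ := exists_affineMap_apply_eq hz v
  have : CompleteSpace E := FiniteDimensional.complete ℝ E
  refine ⟨(InnerProductSpace.toDual ℝ E).symm (LinearMap.toContinuousLinearMap f.linear), -f 0,
    fun i => ?_⟩
  rw [InnerProductSpace.toDual_symm_apply, LinearMap.coe_toContinuousLinearMap', ← hf,
    ← sub_eq_add_neg, f.decomp', Pi.sub_apply]

lemma exists_norm_eq_one_inner_lt_inner [Nontrivial E] {ι : Type*} {z : ι → E}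
    (hz : AffineIndependent ℝ z) (v : ι → ℝ) :
    ∃ θ : E, ‖θ‖ = 1 ∧ ∀ i j, v i < v j → ⟪θ, z i⟫ < ⟪θ, z j⟫ := by
  obtain ⟨θ, c, hθ⟩ := exists_inner_eq_add_const hz v
  rcases eq_or_ne θ 0 with rfl | hθ0
  · obtain ⟨θ', hθ'⟩ := exists_norm_eq E zero_le_one
    have hconst (i : ι) : v i = -c := by simpa [eq_comm, eq_neg_iff_add_eq_zero] using hθ i
    exact ⟨θ', hθ', fun i j hij => absurd hij (by simp [hconst])⟩
  · refine ⟨‖θ‖⁻¹ • θ, norm_smul_inv_norm hθ0, fun i j hij => ?_⟩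
    simp only [real_inner_smul_left, hθ]
    gcongr

lemma exists_norm_eq_one_strictMono_inner_of_affineIndependent [Nontrivial E] {m n : ℕ}
    {x : Fin m → E} {y : Fin n → E} (hxy : AffineIndependent ℝ (Sum.elim x y))
    (σ : Equiv.Perm (Fin m)) (τ : Equiv.Perm (Fin n)) :
    ∃ θ : E, ‖θ‖ = 1 ∧ StrictMono (fun i => ⟪θ, x (σ i)⟫) ∧ StrictMono (fun i => ⟪θ, y (τ i)⟫) := by
  obtain ⟨θ, hθ, hlt⟩ := exists_norm_eq_one_inner_lt_inner hxy
    (Sum.elim (fun i => (σ.symm i : ℝ)) fun i => (τ.symm i : ℝ))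
  exact ⟨θ, hθ, fun i j hij => hlt (.inl (σ i)) (.inl (σ j)) (by simpa using hij),
    fun i j hij => hlt (.inr (τ i)) (.inr (τ j)) (by simpa using hij)⟩

end InnerProductSpace

lemma InGeneralPosition.exists_norm_eq_one_strictMono_inner {d n : ℕ} (hn : 0 < n)
    {x y : Fin n → Euc d} (hxy : InGeneralPosition (Sum.elim x y)) (hdim : 2 * n ≤ d + 1)
    (σ τ : Equiv.Perm (Fin n)) :
    ∃ θ : Euc d, ‖θ‖ = 1 ∧ StrictMono (fun i => ⟪θ, x (σ i)⟫) ∧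
      StrictMono (fun i => ⟪θ, y (τ i)⟫) := by
  have : Nonempty (Fin d) := ⟨⟨0, by omega⟩⟩
  have hcard : Fintype.card (Fin n ⊕ Fin n) = 2 * n := by
    rw [Fintype.card_sum, Fintype.card_fin, two_mul]
  rcases (Nat.succ_le_iff.2 hn).eq_or_lt with rfl | hn2
  · obtain ⟨θ, hθ⟩ := exists_norm_eq (Euc d) zero_le_one
    exact ⟨θ, hθ, Subsingleton.strictMono _, Subsingleton.strictMono _⟩
  · exact exists_norm_eq_one_strictMono_inner_of_affineIndependent
      (hxy.affineIndependent (by omega) (by omega)) σ τ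

end GeneralPosition

/-- for point clouds in general position with `2n ≤ d + 1`:
(i) every pair of permutations is realised as the sorting pair of some direction `θ`;
(ii) consequently `minPS(μ, ν) = W₂(μ, ν)`. -/
theorem minPS_eq_W2_general_position {d n : ℕ} (hn : 0 < n)
    (x y : Fin n → Euc d)
    (hgen : InGeneralPosition (Sum.elim x y))
    (hdim : 2 * n ≤ d + 1) :
    (∀ σ τ : Equiv.Perm (Fin n), ∃ θ : Euc d, ‖θ‖ = 1 ∧
      StrictMono (fun i => (⟪θ, x (σ i)⟫ : ℝ)) ∧
      StrictMono (fun i => (⟪θ, y (τ i)⟫ : ℝ))) ∧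
    minPSsq (empMeasure x) (empMeasure y) = W2sq (empMeasure x) (empMeasure y) := by
  have hsort := hgen.exists_norm_eq_one_strictMono_inner hn hdim
  refine ⟨hsort, ?_⟩
  have : NeZero n := ⟨hn.ne'⟩
  rw [empMeasure_eq_map_unif, empMeasure_eq_map_unif]
  refine minPSsq_map_unif_eq_W2sq fun σ => ?_
  obtain ⟨θ, hθ, hx, hy⟩ := hsort (Equiv.refl _) σ
  exact ⟨θ, hθ, hx.monotone, hy.monotone⟩

end
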